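/- arXiv:1208.0085 — 2 statements merged into one kernel-verified Lean document; each statement's English description precedes it below -/
import Mathlib

section
/- For every finite forest F (a finite simple graph with no cycles) and every integer t ≥ 1, Min(F + K_{1,t}) = 1 + Min(F) and Max(F + K_{1,t}) = 1 + Max(F), where F + K_{1,t} denotes the disjoint union of F with the star K_{1,t}. -/
/-!
Write `M` and `m` for the values with Max and with Min to move. A move in the star exhausts
it, so by induction on `F` the two equations for `F + K_{1,t}` reduce to the single inequality
`m(F) ≤ M(F)` for forests (`gameValue_false_le_true`).

This inequality is proved together with a bound on the effect of deleting a support vertex `y`,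
that is, a neighbour of a leaf `x`: both `M` and `m` drop by at most one
(`support_le_and_false_le_true`). For `m`, Min answers in `F` with an optimal move of `F - y`;
this move avoids `x`, so `x` is still a leaf at `y` afterwards and induction applies. For `M`,
an optimal move avoiding `y` is again handled by induction, while after a move `yz` the
inequality `m ≤ M` for the smaller forest `F - {y, z}` does the job. Finally
`M(F) ≥ 1 + m(F - {x, y}) = 1 + m(F - y) ≥ m(F)`, because `x` is isolated in `F - y`.

The remaining ingredients hold in every graph: values do not increase when a vertex is
deleted (`gameValue_mono`), and isolated vertices are irrelevant (`gameValue_erase_isolated`).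
-/

open Finset

variable {V : Type*} [DecidableEq V]

/-- The legal moves in the matching game on `G` when the set of remaining
(undeleted) vertices is `s`: ordered pairs of adjacent remaining vertices. -/
def matchPlays (G : SimpleGraph V) [DecidableRel G.Adj] (s : Finset V) :
    Finset (V × V) :=
  (s ×ˢ s).filter fun p => G.Adj p.1 p.2

lemma matchPlays_card {G : SimpleGraph V} [DecidableRel G.Adj] {s : Finset V}
    {p : V × V} (hp : p ∈ matchPlays G s) :
    (s \ {p.1, p.2}).card < s.card := by
  simp only [matchPlays, mem_filter, mem_product] at hp
  refine card_lt_card (Finset.sdiff_ssubset ?_ ⟨p.1, mem_insert_self _ _⟩)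
  intro x hx
  rcases mem_insert.mp hx with h | h
  · exact h ▸ hp.1.1
  · exact (mem_singleton.mp h) ▸ hp.1.2

/-- The value of the matching game on the subgraph of `G` induced by the vertex
set `s`, with Max to move if `maxTurn = true` and Min to move otherwise:
the number of *further* edges added to the matching under optimal play. -/
def gameValue (G : SimpleGraph V) [DecidableRel G.Adj] (maxTurn : Bool)
    (s : Finset V) : ℕ :=
  if h : (matchPlays G s).Nonempty then
    if maxTurn then
      (matchPlays G s).attach.sup
        fun p => 1 + gameValue G false (s \ {p.1.1, p.1.2})
    else
      (matchPlays G s).attach.inf' (by simpa using h)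
        fun p => 1 + gameValue G true (s \ {p.1.1, p.1.2})
  else 0
termination_by s.card
decreasing_by
  · exact matchPlays_card p.2
  · exact matchPlays_card p.2

/-- The Max-start game matching number `Max(G)`. -/
noncomputable def gameMax [Fintype V] (G : SimpleGraph V) : ℕ :=
  letI : DecidableRel G.Adj := Classical.decRel _
  gameValue G true Finset.univ

/-- The Min-start game matching number `Min(G)`. -/
noncomputable def gameMin [Fintype V] (G : SimpleGraph V) : ℕ :=
  letI : DecidableRel G.Adj := Classical.decRel _
  gameValue G false Finset.univ

/-- `M` is a matching in `G`: a set of edges of `G` that are pairwise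
vertex-disjoint. -/
def IsMatchingSet (G : SimpleGraph V) (M : Finset (Sym2 V)) : Prop :=
  (∀ e ∈ M, e ∈ G.edgeSet) ∧
    ∀ e ∈ M, ∀ f ∈ M, e ≠ f → ∀ v : V, v ∈ e → v ∉ f

/-- The matching number `α'(G)`: the maximum size of a matching in `G`. -/
noncomputable def matchingNumber (G : SimpleGraph V) : ℕ :=
  sSup {n | ∃ M : Finset (Sym2 V), IsMatchingSet G M ∧ M.card = n}

/-! ### Moves and values -/

section Moves

variable {W : Type*} {G : SimpleGraph W} [DecidableRel G.Adj] {s : Finset W}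

lemma mem_matchPlays {p : W × W} :
    p ∈ matchPlays G s ↔ (p.1 ∈ s ∧ p.2 ∈ s) ∧ G.Adj p.1 p.2 := by
  simp [matchPlays]

variable [DecidableEq W]

lemma gameValue_eq_zero (h : ∀ u ∈ s, ∀ v ∈ s, ¬ G.Adj u v) (b : Bool) :
    gameValue G b s = 0 := by
  rw [gameValue, dif_neg]
  rintro ⟨p, hp⟩
  rw [mem_matchPlays] at hp
  exact h _ hp.1.1 _ hp.1.2 hp.2

lemma le_gameValue_true {u v : W} (hu : u ∈ s) (hv : v ∈ s) (h : G.Adj u v) :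
    1 + gameValue G false (s \ {u, v}) ≤ gameValue G true s := by
  have hp : (u, v) ∈ matchPlays G s := mem_matchPlays.2 ⟨⟨hu, hv⟩, h⟩
  rw [gameValue.eq_def G true s, dif_pos ⟨_, hp⟩, if_pos rfl]
  exact Finset.le_sup (f := fun p : {x // x ∈ matchPlays G s} =>
    1 + gameValue G false (s \ {p.1.1, p.1.2})) (mem_attach _ ⟨(u, v), hp⟩)

lemma gameValue_false_le {u v : W} (hu : u ∈ s) (hv : v ∈ s) (h : G.Adj u v) :
    gameValue G false s ≤ 1 + gameValue G true (s \ {u, v}) := by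
  have hp : (u, v) ∈ matchPlays G s := mem_matchPlays.2 ⟨⟨hu, hv⟩, h⟩
  rw [gameValue.eq_def G false s, dif_pos ⟨_, hp⟩, if_neg (by simp)]
  exact Finset.inf'_le (f := fun p : {x // x ∈ matchPlays G s} =>
    1 + gameValue G true (s \ {p.1.1, p.1.2})) (mem_attach _ ⟨(u, v), hp⟩)

/-- An optimal move exists for either player as long as an edge remains. -/
lemma exists_optimal_move (h : ∃ u ∈ s, ∃ v ∈ s, G.Adj u v) (b : Bool) :
    ∃ u ∈ s, ∃ v ∈ s, G.Adj u v ∧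
      gameValue G b s = 1 + gameValue G (!b) (s \ {u, v}) := by
  obtain ⟨u, hu, v, hv, huv⟩ := h
  have hp : (matchPlays G s).Nonempty := ⟨(u, v), mem_matchPlays.2 ⟨⟨hu, hv⟩, huv⟩⟩
  cases b
  · obtain ⟨p, -, h⟩ := Finset.exists_mem_eq_inf' (by simpa using hp :
      (matchPlays G s).attach.Nonempty)
      (fun p => 1 + gameValue G true (s \ {p.1.1, p.1.2}))
    have hp' := mem_matchPlays.1 p.2
    refine ⟨_, hp'.1.1, _, hp'.1.2, hp'.2, ?_⟩
    rw [gameValue, dif_pos hp, if_neg (by simp)]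
    exact h
  · obtain ⟨p, -, h⟩ := Finset.exists_mem_eq_sup _ (by simpa using hp :
      (matchPlays G s).attach.Nonempty)
      (fun p => 1 + gameValue G false (s \ {p.1.1, p.1.2}))
    have hp' := mem_matchPlays.1 p.2
    refine ⟨_, hp'.1.1, _, hp'.1.2, hp'.2, ?_⟩
    rw [gameValue, dif_pos hp, if_pos rfl]
    exact h

lemma card_sdiff_pair_lt {u v : W} (hu : u ∈ s) : (s \ {u, v}).card < s.card :=
  card_lt_card ⟨sdiff_subset, fun h => by simpa using h hu⟩

lemma erase_erase_eq_sdiff (s : Finset W) (u v : W) : (s.erase u).erase v = s \ {u, v} := by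
  ext z
  simp only [mem_erase, mem_sdiff, mem_insert, mem_singleton]
  tauto

lemma sdiff_pair_erase (s : Finset W) (u v w : W) :
    (s \ {u, v}).erase w = s.erase w \ {u, v} := by
  ext z
  simp only [mem_erase, mem_sdiff]
  tauto

end Moves

/-- Positions whose legal moves correspond along an embedding `f` have the same value. Only the
endpoints of edges are compared, so isolated vertices are free to differ. -/
lemma gameValue_eq_of_embedding {W W' : Type*} [DecidableEq W] [DecidableEq W']
    {G : SimpleGraph W} {G' : SimpleGraph W'} [DecidableRel G.Adj] [DecidableRel G'.Adj]
    (f : G ↪g G') (b : Bool) (s : Finset W) (s' : Finset W')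
    (hs : ∀ u v, G.Adj u v → ((f u ∈ s' ∧ f v ∈ s') ↔ (u ∈ s ∧ v ∈ s)))
    (h : ∀ u' ∈ s', ∀ v' ∈ s', G'.Adj u' v' → ∃ u v, f u = u' ∧ f v = v') :
    gameValue G' b s' = gameValue G b s := by
  induction hn : s.card using Nat.strong_induction_on generalizing b s s' with
  | _ n ih =>
    subst hn
    have key : ∀ b u v, u ∈ s →
        gameValue G' b (s' \ {f u, f v}) = gameValue G b (s \ {u, v}) := by
      intro b u v hu
      refine ih _ (card_sdiff_pair_lt hu) b _ _ (fun x y hxy => ?_)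
        (fun u' hu' v' hv' => h _ (sdiff_subset hu') _ (sdiff_subset hv')) rfl
      have := hs x y hxy
      simp only [mem_sdiff, mem_insert, mem_singleton, f.injective.eq_iff]
      tauto
    by_cases he : ∃ u ∈ s, ∃ v ∈ s, G.Adj u v
    · have he' : ∃ u ∈ s', ∃ v ∈ s', G'.Adj u v := by
        obtain ⟨u, hu, v, hv, huv⟩ := he
        have h' := (hs u v huv).2 ⟨hu, hv⟩
        exact ⟨f u, h'.1, f v, h'.2, f.map_adj_iff.2 huv⟩
      obtain ⟨u, hu, v, hv, huv, e⟩ := exists_optimal_move he b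
      obtain ⟨u', hu', v', hv', huv', e'⟩ := exists_optimal_move he' b
      obtain ⟨x, y, rfl, rfl⟩ := h u' hu' v' hv' huv'
      rw [f.map_adj_iff] at huv'
      obtain ⟨hx, hy⟩ := (hs x y huv').1 ⟨hu', hv'⟩
      obtain ⟨hfu, hfv⟩ := (hs u v huv).2 ⟨hu, hv⟩
      rw [key _ _ _ hx] at e'
      cases b
      · have h1 := gameValue_false_le hx hy huv'
        have h2 := gameValue_false_le hfu hfv (f.map_adj_iff.2 huv)
        rw [key _ _ _ hu] at h2
        simp only [Bool.not_false] at e e'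
        omega
      · have h1 := le_gameValue_true hx hy huv'
        have h2 := le_gameValue_true hfu hfv (f.map_adj_iff.2 huv)
        rw [key _ _ _ hu] at h2
        simp only [Bool.not_true] at e e'
        omega
    · rw [gameValue_eq_zero (G := G) (by simpa using he), gameValue_eq_zero]
      intro u' hu' v' hv' huv'
      obtain ⟨x, y, rfl, rfl⟩ := h u' hu' v' hv' huv'
      have hxy := f.map_adj_iff.1 huv'
      obtain ⟨hx, hy⟩ := (hs x y hxy).1 ⟨hu', hv'⟩
      exact he ⟨x, hx, y, hy, hxy⟩

section Graph

variable {W : Type*} [DecidableEq W] {G : SimpleGraph W} [DecidableRel G.Adj]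

lemma gameValue_erase_isolated (b : Bool) {s : Finset W} {w : W}
    (h : ∀ v ∈ s, ¬ G.Adj w v) : gameValue G b (s.erase w) = gameValue G b s := by
  refine gameValue_eq_of_embedding (SimpleGraph.Embedding.refl (G := G)) b s (s.erase w)
    (fun u v huv => ?_) (fun u _ v _ _ => ⟨u, v, rfl, rfl⟩)
  simp only [SimpleGraph.Embedding.refl, RelEmbedding.refl_apply, mem_erase]
  constructor
  · tauto
  · rintro ⟨hu, hv⟩
    exact ⟨⟨by rintro rfl; exact h v hv huv, hu⟩, ⟨by rintro rfl; exact h u hu huv.symm, hv⟩⟩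

/-! ### Deleting a vertex -/

/-- Deleting a vertex never increases either value. -/
lemma gameValue_mono (b : Bool) (s : Finset W) (w : W) :
    gameValue G b (s.erase w) ≤ gameValue G b s := by
  induction hn : s.card using Nat.strong_induction_on generalizing b s w with
  | _ n ih =>
    subst hn
    by_cases hw : w ∈ s
    swap
    · rw [erase_eq_of_notMem hw]
    have hlt : (s.erase w).card < s.card := card_erase_lt_of_mem hw
    by_cases he : ∃ u ∈ s.erase w, ∃ v ∈ s.erase w, G.Adj u v
    swap
    · rw [gameValue_eq_zero (by simpa using he)]
      exact Nat.zero_le _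
    cases b
    · have he' : ∃ u ∈ s, ∃ v ∈ s, G.Adj u v := by
        obtain ⟨u, hu, v, hv, huv⟩ := he
        exact ⟨u, erase_subset _ _ hu, v, erase_subset _ _ hv, huv⟩
      -- If Min deletes `w` by a move `wz`, it remains to see `m(H) ≤ 1 + M(H - z)` for `H = s - w`.
      have del : ∀ z ∈ s.erase w, gameValue G false (s.erase w) ≤
          1 + gameValue G true ((s.erase w).erase z) := by
        intro z hz
        by_cases hiso : ∃ x ∈ s.erase w, G.Adj z x
        · obtain ⟨x, hx, hzx⟩ := hiso
          have h1 := gameValue_false_le hz hx hzx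
          have h2 := ih _ ((card_erase_lt_of_mem hz).trans hlt) true ((s.erase w).erase z) x rfl
          have h3 : ((s.erase w).erase z).erase x = s.erase w \ {z, x} := by
            rw [erase_erase_eq_sdiff]
          rw [h3] at h2
          omega
        · rw [gameValue_erase_isolated true (by simpa using hiso)]
          obtain ⟨x, hx, y, hy, hxy⟩ := he
          have h1 := gameValue_false_le hx hy hxy
          have h2 := ih _ hlt true (s.erase w) x rfl
          have h3 := ih _ ((card_erase_lt_of_mem hx).trans hlt) true ((s.erase w).erase x) y rfl
          have h4 : ((s.erase w).erase x).erase y = s.erase w \ {x, y} := by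
            rw [erase_erase_eq_sdiff]
          rw [h4] at h3
          omega
      obtain ⟨u, hu, v, hv, huv, e⟩ := exists_optimal_move he' false
      rw [e]
      simp only [Bool.not_false]
      by_cases hwu : u = w
      · subst hwu
        have hvu : v ∈ s.erase u := mem_erase.2 ⟨huv.ne', hv⟩
        have h1 := del v hvu
        have h2 : (s.erase u).erase v = s \ {u, v} := by
          rw [erase_erase_eq_sdiff]
        rwa [h2] at h1
      by_cases hwv : v = w
      · subst hwv
        have h1 := del u (mem_erase.2 ⟨huv.ne, hu⟩)
        have h2 : (s.erase v).erase u = s \ {u, v} := by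
          rw [erase_erase_eq_sdiff, pair_comm]
        rwa [h2] at h1
      have h1 := gameValue_false_le (mem_erase.2 ⟨hwu, hu⟩) (mem_erase.2 ⟨hwv, hv⟩) huv
      have h2 := ih _ (card_sdiff_pair_lt hu) true (s \ {u, v}) w rfl
      have h3 : (s \ {u, v}).erase w = s.erase w \ {u, v} := sdiff_pair_erase _ _ _ _
      rw [h3] at h2
      omega
    · obtain ⟨u, hu, v, hv, huv, e⟩ := exists_optimal_move he true
      have hu' := mem_of_mem_erase hu
      have h1 := le_gameValue_true hu' (mem_of_mem_erase hv) huv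
      have h2 := ih _ (card_sdiff_pair_lt hu') false (s \ {u, v}) w rfl
      have h3 : (s \ {u, v}).erase w = s.erase w \ {u, v} := sdiff_pair_erase _ _ _ _
      rw [h3] at h2
      simp only [Bool.not_true] at e
      omega

/-! ### Forests -/

/-- An induced subgraph of a forest that has an edge has a leaf `x`, with neighbour `y`:
otherwise every path in it could be prolonged at its start. -/
lemma exists_leaf (hG : G.IsAcyclic) {s : Finset W} (h : ∃ u ∈ s, ∃ v ∈ s, G.Adj u v) :
    ∃ x ∈ s, ∃ y ∈ s, G.Adj x y ∧ ∀ z ∈ s, G.Adj x z → z = y := by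
  by_contra! hno
  have long : ∀ n : ℕ, ∃ u v, ∃ p : G.Walk u v, p.IsPath ∧ (∀ z ∈ p.support, z ∈ s) ∧
      p.length = n + 1 := by
    intro n
    induction n with
    | zero =>
      obtain ⟨u, hu, v, hv, huv⟩ := h
      refine ⟨u, v, huv.toWalk, ?_, ?_, by simp⟩
      · simp [huv.ne]
      · simp [hu, hv]
    | succ n ihn =>
      obtain ⟨u, v, p, hp, hs, hl⟩ := ihn
      have hnil : ¬ p.Nil := by
        rw [← SimpleGraph.Walk.length_eq_zero_iff]
        omega
      obtain ⟨z, hz, huz, hne⟩ := hno u (hs _ p.start_mem_support) p.snd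
        (hs _ (p.getVert_mem_support 1)) (p.adj_snd hnil)
      refine ⟨z, v, .cons huz.symm p, ?_, ?_, by simp [hl]⟩
      · rw [SimpleGraph.Walk.cons_isPath_iff]
        exact ⟨hp, fun hmem => hne (hG.eq_snd_of_adj_start hp huz hmem)⟩
      · simpa [hz] using hs
  obtain ⟨u, v, p, hp, hs, hl⟩ := long s.card
  have h1 : p.support.toFinset ⊆ s := fun z hz => hs z (by simpa using hz)
  have h2 := card_le_card h1
  rw [List.toFinset_card_of_nodup hp.support_nodup, SimpleGraph.Walk.length_support] at h2
  omega

/-- Deleting the neighbour `y` of a leaf `x` of a forest lowers each value by at most one, and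
having the first move does not hurt Max. The two facts are proved by a joint induction. -/
lemma support_le_and_false_le_true (hG : G.IsAcyclic) (s : Finset W) :
    (∀ b, ∀ x ∈ s, ∀ y ∈ s, G.Adj x y → (∀ z ∈ s, G.Adj x z → z = y) →
      gameValue G b s ≤ 1 + gameValue G b (s.erase y)) ∧
    gameValue G false s ≤ gameValue G true s := by
  induction hn : s.card using Nat.strong_induction_on generalizing s with
  | _ n ih =>
    subst hn
    have A : ∀ b, ∀ x ∈ s, ∀ y ∈ s, G.Adj x y → (∀ z ∈ s, G.Adj x z → z = y) →
        gameValue G b s ≤ 1 + gameValue G b (s.erase y) := by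
      intro b x hx y hy hxy hleaf
      cases b
      · by_cases he : ∃ u ∈ s.erase y, ∃ v ∈ s.erase y, G.Adj u v
        · obtain ⟨u, hu, v, hv, huv, e⟩ := exists_optimal_move he false
          rw [mem_erase] at hu hv
          have hxu : x ≠ u := by
            rintro rfl
            exact hv.1 (hleaf v hv.2 huv)
          have hxv : x ≠ v := by
            rintro rfl
            exact hu.1 (hleaf u hu.2 huv.symm)
          have h1 := gameValue_false_le hu.2 hv.2 huv
          have h2 := (ih _ (card_sdiff_pair_lt hu.2) (s \ {u, v}) rfl).1 true x
            (by simp [hx, hxu, hxv]) y (by simp [hy, hu.1.symm, hv.1.symm]) hxy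
            (fun z hz => hleaf z (sdiff_subset hz))
          have h3 : (s \ {u, v}).erase y = s.erase y \ {u, v} := sdiff_pair_erase _ _ _ _
          rw [h3] at h2
          simp only [Bool.not_false] at e
          omega
        · have h0 : ∀ u ∈ s.erase y, ∀ v ∈ s.erase y, ¬ G.Adj u v := by simpa using he
          have h1 := gameValue_false_le hx hy hxy
          have h2 : gameValue G true (s \ {x, y}) = 0 :=
            gameValue_eq_zero (fun u hu v hv => h0 u (by simp_all) v (by simp_all)) true
          omega
      · -- a first move `yz` of Max leaves a smaller forest, where Max prefers to be on the move
        have hit : ∀ z ∈ s, gameValue G false (s \ {y, z}) ≤ gameValue G true (s.erase y) := by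
          intro z hz
          have h1 := (ih _ (card_sdiff_pair_lt hy) (s \ {y, z}) rfl).2
          have h2 := gameValue_mono (G := G) true (s.erase y) z
          have h3 : (s.erase y).erase z = s \ {y, z} := by
            rw [erase_erase_eq_sdiff]
          rw [h3] at h2
          omega
        obtain ⟨u, hu, v, hv, huv, e⟩ := exists_optimal_move ⟨x, hx, y, hy, hxy⟩ true
        simp only [Bool.not_true] at e
        rw [e]
        by_cases hyu : u = y
        · subst hyu
          have := hit v hv
          omega
        by_cases hyv : v = y
        · subst hyv
          have := hit u hu
          rw [pair_comm] at this
          omega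
        have hxu : x ≠ u := by
          rintro rfl
          exact hyv (hleaf v hv huv)
        have hxv : x ≠ v := by
          rintro rfl
          exact hyu (hleaf u hu huv.symm)
        have h1 := le_gameValue_true (mem_erase.2 ⟨hyu, hu⟩) (mem_erase.2 ⟨hyv, hv⟩) huv
        have h2 := (ih _ (card_sdiff_pair_lt hu) (s \ {u, v}) rfl).1 false x
          (by simp [hx, hxu, hxv]) y (by simp [hy, Ne.symm hyu, Ne.symm hyv]) hxy
          (fun z hz => hleaf z (sdiff_subset hz))
        have h3 : (s \ {u, v}).erase y = s.erase y \ {u, v} := sdiff_pair_erase _ _ _ _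
        rw [h3] at h2
        omega
    refine ⟨A, ?_⟩
    by_cases he : ∃ u ∈ s, ∃ v ∈ s, G.Adj u v
    · obtain ⟨x, hx, y, hy, hxy, hleaf⟩ := exists_leaf hG he
      have h1 := A false x hx y hy hxy hleaf
      have h2 := le_gameValue_true hx hy hxy
      have h3 : gameValue G false ((s.erase y).erase x) = gameValue G false (s.erase y) :=
        gameValue_erase_isolated false fun v hv h =>
          (mem_erase.1 hv).1 (hleaf v (mem_erase.1 hv).2 h)
      have h4 : (s.erase y).erase x = s \ {x, y} := by
        rw [erase_erase_eq_sdiff, pair_comm]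
      rw [h4] at h3
      omega
    · rw [gameValue_eq_zero (by simpa using he)]
      exact Nat.zero_le _

lemma gameValue_false_le_true (hG : G.IsAcyclic) (s : Finset W) :
    gameValue G false s ≤ gameValue G true s :=
  (support_le_and_false_le_true hG s).2

/-! ### Adding a star -/

/-- The disjoint union `G + K_{1,t}`. -/
abbrev addStar {W : Type*} (G : SimpleGraph W) (t : ℕ) : SimpleGraph (W ⊕ (Fin 1 ⊕ Fin t)) :=
  SimpleGraph.sum G (completeBipartiteGraph (Fin 1) (Fin t))

/-- The game on `G + K_{1,t}` in a position where the star is untouched and `s` is the set of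
remaining vertices of the forest. Inductively, a move in the forest leads to values `1 + M`,
`1 + m` there, so only a move in the star could break the equation, and `m ≤ M` excludes that. -/
lemma gameValue_sum_star (hG : G.IsAcyclic) {t : ℕ} (ht : 1 ≤ t)
    [DecidableRel (addStar G t).Adj]
    (b : Bool) (s : Finset W) :
    gameValue (addStar G t) b (s.disjSum univ) = 1 + gameValue G b s := by
  induction hn : s.card using Nat.strong_induction_on generalizing b s with
  | _ n ih =>
    subst hn
    -- every move in the star uses its centre, so all that is left of the star is isolated
    have star : ∀ b, ∀ p q : Fin 1 ⊕ Fin t, (completeBipartiteGraph (Fin 1) (Fin t)).Adj p q →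
        gameValue (addStar G t) b (s.disjSum univ \ {Sum.inr p, Sum.inr q}) = gameValue G b s := by
      intro b p q hpq
      refine gameValue_eq_of_embedding SimpleGraph.Embedding.sumInl b _ _ ?_ ?_
      · simp
      · rintro (u | u) hu (v | v) hv huv
        · exact ⟨u, v, rfl, rfl⟩
        · simp at huv
        · simp at huv
        · exfalso
          rcases p with p | p <;> rcases q with q | q <;> rcases u with u | u <;>
            rcases v with v | v <;> simp at hpq huv hu hv <;>
            simp_all [Subsingleton.elim _ (0 : Fin 1)]
    have forest : ∀ b, ∀ u ∈ s, ∀ v,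
        gameValue (addStar G t) b (s.disjSum univ \ {Sum.inl u, Sum.inl v}) =
          1 + gameValue G b (s \ {u, v}) := by
      intro b u hu v
      rw [← ih _ (card_sdiff_pair_lt hu) b _ rfl]
      congr 1
      ext (x | x) <;> simp
    have hc : (addStar G t).Adj (Sum.inr (Sum.inl 0)) (Sum.inr (Sum.inr ⟨0, ht⟩)) := by
      simp [addStar]
    have hFle := gameValue_false_le_true hG s
    obtain ⟨x, hx, y, hy, hxy, e⟩ := exists_optimal_move (G := addStar G t) (s := s.disjSum univ)
      ⟨_, by simp, _, by simp, hc⟩ b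
    have opt : gameValue (addStar G t) b (s.disjSum univ) = 1 + gameValue G (!b) s ∨
        ∃ u ∈ s, ∃ v ∈ s, G.Adj u v ∧
          gameValue (addStar G t) b (s.disjSum univ) = 1 + (1 + gameValue G (!b) (s \ {u, v})) := by
      rcases x with x | x <;> rcases y with y | y
      · right
        rw [inl_mem_disjSum] at hx hy
        exact ⟨x, hx, y, hy, by simpa [addStar] using hxy, by rw [e, forest _ x hx]⟩
      · simp [addStar] at hxy
      · simp [addStar] at hxy
      · left
        rw [e, star _ x y (by simpa [addStar] using hxy)]
    by_cases he : ∃ u ∈ s, ∃ v ∈ s, G.Adj u v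
    · obtain ⟨u, hu, v, hv, huv, e1⟩ := exists_optimal_move he b
      have huvH : (addStar G t).Adj (Sum.inl u) (Sum.inl v) := by simpa [addStar] using huv
      have hf := forest (!b) u hu v
      cases b
      · have h1 := gameValue_false_le (s := s.disjSum univ) (by simpa using hu)
          (by simpa using hv) huvH
        simp only [Bool.not_false] at *
        rcases opt with h | ⟨p, hp, q, hq, hpq, h⟩
        · omega
        · have := gameValue_false_le hp hq hpq
          omega
      · have h1 := le_gameValue_true (s := s.disjSum univ) (by simpa using hu)
          (by simpa using hv) huvH
        simp only [Bool.not_true] at *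
        rcases opt with h | ⟨p, hp, q, hq, hpq, h⟩
        · omega
        · have := le_gameValue_true hp hq hpq
          omega
    · have h0 : ∀ u ∈ s, ∀ v ∈ s, ¬ G.Adj u v := by simpa using he
      rcases opt with h | ⟨p, hp, q, hq, hpq, h⟩
      · rw [h, gameValue_eq_zero h0, gameValue_eq_zero h0]
      · exact absurd hpq (h0 p hp q hq)

end Graph

/-- adding a disjoint star `K_{1,t}` to a forest increases both
game matching numbers by exactly `1`. -/
theorem stmt16 {V : Type*} [Fintype V] [DecidableEq V] (F : SimpleGraph V)
    (hF : F.IsAcyclic) (t : ℕ) (ht : 1 ≤ t) :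
    gameMin (SimpleGraph.sum F (completeBipartiteGraph (Fin 1) (Fin t)))
        = 1 + gameMin F ∧
    gameMax (SimpleGraph.sum F (completeBipartiteGraph (Fin 1) (Fin t)))
        = 1 + gameMax F := by
  have huniv : (univ : Finset (V ⊕ (Fin 1 ⊕ Fin t))) = (univ : Finset V).disjSum univ := by
    ext (x | x) <;> simp
  constructor
  · unfold gameMin
    rw [huniv]
    exact @gameValue_sum_star _ _ _ (Classical.decRel _) hF _ ht (Classical.decRel _) _ _
  · unfold gameMax
    rw [huniv]
    exact @gameValue_sum_star _ _ _ (Classical.decRel _) hF _ ht (Classical.decRel _) _ _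
end

section
/- For every natural number N, there exists a connected 3-regular finite simple graph G on n vertices with n ≥ N such that 18·Max(G) < 7·n, i.e., Max(G) < (7/18)·n. In fact, for every integer k ≥ 0 there is such a graph with n = 18·2^k - 2. -/
/-!
The graphs are trees whose low-degree vertices are brought up to degree three by attaching *blobs*:
a blob is `K₄` with one edge subdivided, attached through an edge at the subdividing vertex. The
tree has `3c + 1` vertices and a vertex cover `C` of size `c` (it is grown from a single vertex by
adding claws centred at the vertices of `C`), and there are `3c + 3` blobs, so that
`n = 18c + 16`; the case `c = 2 ^ k - 1` gives `n = 18 * 2 ^ k - 2`.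

Min can ensure that each blob is responsible for at most two moves, counting the edge attaching it:
whenever Max touches an untouched blob, Min has an answer in that blob after which it has no
playable edge left (`exists_answer`). In answer to any other move, Min plays the edge of an
untouched blob that avoids the subdividing vertex and its two neighbours, leaving a path on three
vertices in which one more move can be made; if no blob is untouched, any move will do
(`exists_free_move`). The moves inside the tree form a matching, so there are at most `c` of them.
Formally, the number of remaining vertices of `C` plus `2` for each untouched blob plus `1` for each
such path is a potential that drops by at least two per round (`move_analysis`,
`gameValue_le_potential`). Hence `Max(G) ≤ c + 2 (3c + 3) = 7c + 6`, and
`18 (7c + 6) < 7 (18c + 16)`.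
-/

open Finset

variable {V : Type*} [DecidableEq V]

/-! ### Upper bounds for the game from a Min strategy -/

lemma mem_matchPlays_s19 {W : Type*} {G : SimpleGraph W} [DecidableRel G.Adj] {s : Finset W}
    {x y : W} :
    (x, y) ∈ matchPlays G s ↔ x ∈ s ∧ y ∈ s ∧ G.Adj x y := by
  simp [matchPlays, and_assoc]

lemma gameValue_true_le {G : SimpleGraph V} [DecidableRel G.Adj] {s : Finset V} {m : ℕ}
    (h : ∀ x y, x ∈ s → y ∈ s → G.Adj x y → 1 + gameValue G false (s \ {x, y}) ≤ m) :
    gameValue G true s ≤ m := by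
  rw [gameValue]
  split_ifs with hn
  · refine Finset.sup_le ?_
    rintro ⟨⟨x, y⟩, hp⟩ -
    obtain ⟨hx, hy, hxy⟩ := mem_matchPlays_s19.1 hp
    exact h x y hx hy hxy
  · simp_all
  · exact Nat.zero_le _

lemma gameValue_false_le_s19 {G : SimpleGraph V} [DecidableRel G.Adj] {s : Finset V} {x y : V}
    (hx : x ∈ s) (hy : y ∈ s) (hxy : G.Adj x y) :
    gameValue G false s ≤ 1 + gameValue G true (s \ {x, y}) := by
  have hp : (x, y) ∈ matchPlays G s := mem_matchPlays_s19.2 ⟨hx, hy, hxy⟩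
  rw [gameValue]
  split_ifs with hn hb
  · exact absurd hb (by simp)
  · exact Finset.inf'_le (fun p : {p // p ∈ matchPlays G s} =>
      1 + gameValue G true (s \ {p.1.1, p.1.2})) (mem_attach _ ⟨(x, y), hp⟩)
  · exact Nat.zero_le _

lemma gameValue_false_eq_zero {G : SimpleGraph V} [DecidableRel G.Adj] {s : Finset V}
    (h : ∀ x y, x ∈ s → y ∈ s → ¬ G.Adj x y) : gameValue G false s = 0 := by
  rw [gameValue, dif_neg]
  rintro ⟨⟨x, y⟩, hp⟩
  obtain ⟨hx, hy, hxy⟩ := mem_matchPlays_s19.1 hp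
  exact h x y hx hy hxy

/-- If Min can maintain the invariant `Q` while the potential `Φ` drops by at least `2` in each
round (by at least `1` in a last round consisting of a single move of Max), then the game started
by Max lasts at most `Φ s` moves. -/
lemma gameValue_le_potential {G : SimpleGraph V} [DecidableRel G.Adj]
    (Q : Finset V → Prop) (Φ : Finset V → ℕ)
    (step : ∀ s, Q s → ∀ x y, x ∈ s → y ∈ s → G.Adj x y →
      (1 ≤ Φ s ∧ ∀ x' y', x' ∈ s \ {x, y} → y' ∈ s \ {x, y} → ¬ G.Adj x' y') ∨
      ∃ x' y', x' ∈ s \ {x, y} ∧ y' ∈ s \ {x, y} ∧ G.Adj x' y' ∧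
        Q ((s \ {x, y}) \ {x', y'}) ∧ Φ ((s \ {x, y}) \ {x', y'}) + 2 ≤ Φ s)
    (s : Finset V) (hs : Q s) : gameValue G true s ≤ Φ s := by
  induction hn : s.card using Nat.strong_induction_on generalizing s with
  | _ n ih =>
    refine gameValue_true_le fun x y hx hy hxy => ?_
    rcases step s hs x y hx hy hxy with ⟨h1, h2⟩ | ⟨x', y', hx', hy', hxy', hQ, hΦ⟩
    · rw [gameValue_false_eq_zero h2]
      omega
    · have hlt : ((s \ {x, y}) \ {x', y'}).card < n := by
        have h1 := matchPlays_card (mem_matchPlays_s19.2 ⟨hx, hy, hxy⟩)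
        have h2 := matchPlays_card (mem_matchPlays_s19.2 ⟨hx', hy', hxy'⟩)
        simp only at h1 h2
        omega
      have h3 := ih _ hlt _ hQ rfl
      have h4 := gameValue_false_le_s19 hx' hy' hxy'
      omega

/-! ### The blob and graphs with blobs attached -/

/-- The blob: `K₄` on `1, 2, 3, 4` with the edge `12` subdivided by the vertex `0`. The vertex `0`
has degree two and is the one through which the blob is attached to the rest of the graph. -/
def blob : SimpleGraph (Fin 5) where
  Adj x y := s(x, y) ∈ ({s(0, 1), s(0, 2), s(1, 3), s(1, 4), s(2, 3), s(2, 4), s(3, 4)} :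
    Finset (Sym2 (Fin 5)))
  symm := ⟨by decide⟩
  loopless := ⟨by decide⟩

instance : DecidableRel blob.Adj := fun x y =>
  inferInstanceAs (Decidable (s(x, y) ∈ ({s(0, 1), s(0, 2), s(1, 3), s(1, 4), s(2, 3), s(2, 4),
    s(3, 4)} : Finset (Sym2 (Fin 5)))))

/-- The graph obtained from `H` by attaching, for each `b : B`, a copy of the blob through an edge
joining its vertex `0` to the vertex `att b` of `H`. -/
def blobGraph {I B : Type} (H : SimpleGraph I) (att : B → I) : SimpleGraph (I ⊕ B × Fin 5) where
  Adj
    | .inl u, .inl v => H.Adj u v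
    | .inl u, .inr (b, x) => att b = u ∧ x = 0
    | .inr (b, x), .inl u => att b = u ∧ x = 0
    | .inr (b, x), .inr (b', y) => b = b' ∧ blob.Adj x y
  symm := ⟨by
    rintro (u | ⟨b, x⟩) (v | ⟨b', y⟩) h
    · exact SimpleGraph.Adj.symm (G := H) h
    · exact h
    · exact h
    · exact ⟨h.1.symm, h.2.symm⟩⟩
  loopless := ⟨by
    rintro (u | ⟨b, x⟩) h
    · exact H.loopless.irrefl u h
    · exact blob.loopless.irrefl x h.2⟩

section Adj
variable {I B : Type} {H : SimpleGraph I} {att : B → I}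

lemma blobGraph_ll {u v : I} : (blobGraph H att).Adj (.inl u) (.inl v) ↔ H.Adj u v := Iff.rfl

lemma blobGraph_lr {u : I} {b : B} {x : Fin 5} :
    (blobGraph H att).Adj (.inl u) (.inr (b, x)) ↔ att b = u ∧ x = 0 := Iff.rfl

lemma blobGraph_rl {u : I} {b : B} {x : Fin 5} :
    (blobGraph H att).Adj (.inr (b, x)) (.inl u) ↔ att b = u ∧ x = 0 := Iff.rfl

lemma blobGraph_rr {b b' : B} {x y : Fin 5} :
    (blobGraph H att).Adj (.inr (b, x)) (.inr (b', y)) ↔ b = b' ∧ blob.Adj x y := Iff.rfl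

end Adj

/-- A set `S` of remaining vertices of a blob is dead if no further edge at the blob can be
played: the attaching vertex is gone, and so are all edges. -/
abbrev Dead (S : Finset (Fin 5)) : Prop :=
  0 ∉ S ∧ ∀ x ∈ S, ∀ y ∈ S, ¬ blob.Adj x y

/-- The states in which Min leaves each blob: untouched, or with only the central edge `34`
removed, or dead. -/
abbrev Good (S : Finset (Fin 5)) : Prop := S = univ ∨ S = {0, 1, 2} ∨ Dead S

/-- The number of moves that a blob in a good state contributes under Min's strategy. -/
abbrev weight (S : Finset (Fin 5)) : ℕ :=
  if S = univ then 2 else if S = {0, 1, 2} then 1 else 0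

lemma weight_of_dead {S : Finset (Fin 5)} (h : Dead S) : weight S = 0 := by
  revert S; decide

/-- Min's answer to a move of Max inside an untouched blob kills the blob. -/
lemma exists_answer (x y : Fin 5) (h : blob.Adj x y) : ∃ x' y', blob.Adj x' y' ∧
    x' ∉ ({x, y} : Finset (Fin 5)) ∧ y' ∉ ({x, y} : Finset (Fin 5)) ∧
    Dead ((univ \ {x, y}) \ {x', y'}) := by
  revert x y; decide

lemma dead_of_half (x y : Fin 5) (hx : x ∈ ({0, 1, 2} : Finset (Fin 5)))
    (hy : y ∈ ({0, 1, 2} : Finset (Fin 5))) (h : blob.Adj x y) :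
    Dead (({0, 1, 2} : Finset (Fin 5)) \ {x, y}) := by
  revert x y; decide

section Game

variable {I B : Type}

/-- The remaining vertices of the blob `b` when `s` is the set of all remaining vertices. The
graph with blobs is relabelled along `f`. -/
def state (f : I ⊕ B × Fin 5 ≃ V) (s : Finset V) (b : B) : Finset (Fin 5) :=
  univ.filter fun x => f (.inr (b, x)) ∈ s

variable {f : I ⊕ B × Fin 5 ≃ V} {C : Finset I}

lemma state_rr (s : Finset V) (b : B) (x y : Fin 5) :
    state f (s \ {f (.inr (b, x)), f (.inr (b, y))}) b = state f s b \ {x, y} := by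
  ext z; simp [state]

lemma state_rr_ne (s : Finset V) {b b' : B} (x y : Fin 5) (h : b' ≠ b) :
    state f (s \ {f (.inr (b, x)), f (.inr (b, y))}) b' = state f s b' := by
  ext z; simp [state, h]

lemma state_lr (s : Finset V) (u : I) (b : B) (x : Fin 5) :
    state f (s \ {f (.inl u), f (.inr (b, x))}) b = state f s b \ {x} := by
  ext z; simp [state]

lemma state_lr_ne (s : Finset V) (u : I) {b b' : B} (x : Fin 5) (h : b' ≠ b) :
    state f (s \ {f (.inl u), f (.inr (b, x))}) b' = state f s b' := by
  ext z; simp [state, h]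

lemma state_ll (s : Finset V) (u v : I) (b : B) :
    state f (s \ {f (.inl u), f (.inl v)}) b = state f s b := by
  ext z; simp [state]

lemma good_change {s t : Finset V} (hs : ∀ b, Good (state f s b)) (b : B)
    (h : ∀ b', b' ≠ b → state f t b' = state f s b') (hb : Good (state f t b)) :
    ∀ b, Good (state f t b) := by
  intro b'
  by_cases hbb : b' = b
  · rwa [hbb]
  · rw [h b' hbb]; exact hs b'

variable [Fintype B]

/-- The potential: the remaining vertices of the vertex cover `C` plus the weights of the blobs. -/
def potential (f : I ⊕ B × Fin 5 ≃ V) (C : Finset I) (s : Finset V) : ℕ :=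
  (C.filter fun u => f (.inl u) ∈ s).card + ∑ b, weight (state f s b)

/-- If vertices are deleted and `b` is the only blob affected, then the potential drops by at
least as much as the weight of `b`. -/
lemma potential_change {s t : Finset V} (hts : t ⊆ s) (b : B)
    (h : ∀ b', b' ≠ b → state f t b' = state f s b') :
    potential f C t + weight (state f s b) ≤ potential f C s + weight (state f t b) := by
  classical
  unfold potential
  rw [← Finset.add_sum_erase univ (fun b => weight (state f t b)) (mem_univ b),
    ← Finset.add_sum_erase univ (fun b => weight (state f s b)) (mem_univ b)]
  have h1 : ∑ b' ∈ univ.erase b, weight (state f t b') =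
      ∑ b' ∈ univ.erase b, weight (state f s b') :=
    Finset.sum_congr rfl fun b' hb' => by rw [h b' (ne_of_mem_erase hb')]
  have h2 : (C.filter fun u => f (.inl u) ∈ t).card ≤ (C.filter fun u => f (.inl u) ∈ s).card :=
    Finset.card_le_card (Finset.monotone_filter_right _ fun u _ hu => hts hu)
  rw [h1]
  omega

variable {H : SimpleGraph I} {att : B → I} {G : SimpleGraph V}

/-- A single move from a position with good blobs either touches an untouched blob, and then has
an answer killing that blob, or leaves all blobs good and decreases the potential. -/
lemma move_analysis (hG : ∀ x y, G.Adj (f x) (f y) ↔ (blobGraph H att).Adj x y)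
    (hC : ∀ u v, H.Adj u v → u ∈ C ∨ v ∈ C) {s : Finset V} (hs : ∀ b, Good (state f s b))
    {x y : V} (hx : x ∈ s) (hy : y ∈ s) (hxy : G.Adj x y) :
    (∃ b, state f s b = univ ∧ ∃ x' y', x' ∈ s \ {x, y} ∧ y' ∈ s \ {x, y} ∧ G.Adj x' y' ∧
        (∀ b, Good (state f ((s \ {x, y}) \ {x', y'}) b)) ∧
        potential f C ((s \ {x, y}) \ {x', y'}) + 2 ≤ potential f C s) ∨
    ((∀ b, Good (state f (s \ {x, y}) b)) ∧
      potential f C (s \ {x, y}) + 1 ≤ potential f C s) := by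
  have full : ∀ {b : B}, state f s b = univ → ∀ z, f (.inr (b, z)) ∈ s := fun h z => by
    have : z ∈ state f s _ := h ▸ mem_univ z
    simpa [state] using this
  -- moves along an attaching edge, in either orientation
  have attach : ∀ (u : I) (b : B), f (.inl u) ∈ s → f (.inr (b, 0)) ∈ s →
      (∃ b₁, state f s b₁ = univ ∧ ∃ x' y', x' ∈ s \ {f (.inl u), f (.inr (b, 0))} ∧
        y' ∈ s \ {f (.inl u), f (.inr (b, 0))} ∧ G.Adj x' y' ∧
        (∀ b', Good (state f ((s \ {f (.inl u), f (.inr (b, 0))}) \ {x', y'}) b')) ∧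
        potential f C ((s \ {f (.inl u), f (.inr (b, 0))}) \ {x', y'}) + 2 ≤
          potential f C s) ∨
      ((∀ b', Good (state f (s \ {f (.inl u), f (.inr (b, 0))}) b')) ∧
        potential f C (s \ {f (.inl u), f (.inr (b, 0))}) + 1 ≤ potential f C s) := by
    intro u b _ hb
    rcases hs b with h | h | h
    · have hd : Dead (((univ : Finset (Fin 5)) \ {0}) \ {3, 4}) := by decide
      have hst : state f ((s \ {f (.inl u), f (.inr (b, 0))}) \
          {f (.inr (b, 3)), f (.inr (b, 4))}) b = (univ \ {0}) \ {3, 4} := by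
        rw [state_rr, state_lr, h]
      have hne : ∀ b', b' ≠ b → state f ((s \ {f (.inl u), f (.inr (b, 0))}) \
          {f (.inr (b, 3)), f (.inr (b, 4))}) b' = state f s b' := fun b' hb' => by
        rw [state_rr_ne _ _ _ hb', state_lr_ne _ _ _ hb']
      refine .inl ⟨b, h, f (.inr (b, 3)), f (.inr (b, 4)), by simp [full h], by simp [full h],
        (hG _ _).2 ⟨rfl, by decide⟩, good_change hs b hne ?_, ?_⟩
      · rw [hst]; exact .inr (.inr hd)
      · have := potential_change (C := C) (sdiff_subset.trans sdiff_subset) b hne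
        rw [hst, h, weight_of_dead hd] at this
        simpa [weight] using this
    · have hd : Dead (({0, 1, 2} : Finset (Fin 5)) \ {0}) := by decide
      have hst : state f (s \ {f (.inl u), f (.inr (b, 0))}) b = {0, 1, 2} \ {0} := by
        rw [state_lr, h]
      have hne := fun b' (hb' : b' ≠ b) => state_lr_ne (f := f) s u 0 hb'
      refine .inr ⟨good_change hs b hne ?_, ?_⟩
      · rw [hst]; exact .inr (.inr hd)
      · have := potential_change (C := C) sdiff_subset b hne
        rw [hst, h, weight_of_dead hd] at this
        simpa [weight, show ({0, 1, 2} : Finset (Fin 5)) ≠ univ by decide] using this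
    · exact absurd (show (0 : Fin 5) ∈ state f s b by simpa [state] using hb) h.1
  obtain ⟨x, rfl⟩ := f.surjective x
  obtain ⟨y, rfl⟩ := f.surjective y
  rw [hG] at hxy
  rcases x with u | ⟨b, x⟩ <;> rcases y with v | ⟨b', y⟩
  · right
    refine ⟨fun b => by rw [state_ll]; exact hs b, ?_⟩
    unfold potential
    simp only [state_ll]
    have : (C.filter fun w => f (.inl w) ∈ s \ {f (.inl u), f (.inl v)}).card <
        (C.filter fun w => f (.inl w) ∈ s).card := by
      refine Finset.card_lt_card ((Finset.ssubset_iff_of_subset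
        (Finset.monotone_filter_right _ fun u _ hu => (mem_sdiff.1 hu).1)).2 ?_)
      rcases hC u v hxy with h | h
      · exact ⟨u, by simp [h, hx], by simp⟩
      · exact ⟨v, by simp [h, hy], by simp⟩
    omega
  · obtain ⟨-, rfl⟩ := blobGraph_lr.1 hxy
    exact attach u b' hx hy
  · obtain ⟨-, rfl⟩ := blobGraph_rl.1 hxy
    have := attach v b hy hx
    rwa [Finset.pair_comm (f (.inl v))] at this
  · obtain ⟨rfl, hadj⟩ := blobGraph_rr.1 hxy
    have hx' : x ∈ state f s b := by simpa [state] using hx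
    have hy' : y ∈ state f s b := by simpa [state] using hy
    rcases hs b with h | h | h
    · obtain ⟨x', y', hadj', hxn, hyn, hd⟩ := exists_answer x y hadj
      have hst : state f ((s \ {f (.inr (b, x)), f (.inr (b, y))}) \
          {f (.inr (b, x')), f (.inr (b, y'))}) b = (univ \ {x, y}) \ {x', y'} := by
        rw [state_rr, state_rr, h]
      have hne : ∀ b', b' ≠ b → state f ((s \ {f (.inr (b, x)), f (.inr (b, y))}) \
          {f (.inr (b, x')), f (.inr (b, y'))}) b' = state f s b' := fun b' hb' => by
        rw [state_rr_ne _ _ _ hb', state_rr_ne _ _ _ hb']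
      refine .inl ⟨b, h, f (.inr (b, x')), f (.inr (b, y')), by simpa [full h] using hxn,
        by simpa [full h] using hyn,
        (hG _ _).2 ⟨rfl, hadj'⟩, good_change hs b hne ?_, ?_⟩
      · rw [hst]; exact .inr (.inr hd)
      · have := potential_change (C := C) (sdiff_subset.trans sdiff_subset) b hne
        rw [hst, h, weight_of_dead hd] at this
        simpa [weight] using this
    · rw [h] at hx' hy'
      have hd := dead_of_half x y hx' hy' hadj
      have hst : state f (s \ {f (.inr (b, x)), f (.inr (b, y))}) b = {0, 1, 2} \ {x, y} := by
        rw [state_rr, h]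
      have hne := fun b' (hb' : b' ≠ b) => state_rr_ne (f := f) s x y hb'
      refine .inr ⟨good_change hs b hne ?_, ?_⟩
      · rw [hst]; exact .inr (.inr hd)
      · have := potential_change (C := C) sdiff_subset b hne
        rw [hst, h, weight_of_dead hd] at this
        simpa [weight, show ({0, 1, 2} : Finset (Fin 5)) ≠ univ by decide] using this
    · exact absurd hadj (h.2 x hx' y hy')

/-- Unless the game is over, Min has a move keeping all blobs good and decreasing the potential:
the central edge of an untouched blob if there is one, and an arbitrary edge otherwise. -/
lemma exists_free_move (hG : ∀ x y, G.Adj (f x) (f y) ↔ (blobGraph H att).Adj x y)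
    (hC : ∀ u v, H.Adj u v → u ∈ C ∨ v ∈ C) {s : Finset V} (hs : ∀ b, Good (state f s b))
    (hne : ∃ x y, x ∈ s ∧ y ∈ s ∧ G.Adj x y) :
    ∃ x y, x ∈ s ∧ y ∈ s ∧ G.Adj x y ∧ (∀ b, Good (state f (s \ {x, y}) b)) ∧
      potential f C (s \ {x, y}) + 1 ≤ potential f C s := by
  by_cases hfull : ∃ b, state f s b = univ
  · obtain ⟨b, h⟩ := hfull
    have full : ∀ z, f (.inr (b, z)) ∈ s := fun z => by
      have : z ∈ state f s b := h ▸ mem_univ z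
      simpa [state] using this
    have hst : state f (s \ {f (.inr (b, 3)), f (.inr (b, 4))}) b = {0, 1, 2} := by
      rw [state_rr, h]; decide
    have hne := fun b' (hb' : b' ≠ b) => state_rr_ne (f := f) s 3 4 hb'
    refine ⟨_, _, full 3, full 4, (hG _ _).2 ⟨rfl, by decide⟩, good_change hs b hne ?_, ?_⟩
    · rw [hst]; exact .inr (.inl rfl)
    · have := potential_change (C := C) sdiff_subset b hne
      rw [hst, h, show weight univ = 2 by decide, show weight {0, 1, 2} = 1 by decide] at this
      omega
  · obtain ⟨x, y, hx, hy, hxy⟩ := hne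
    rcases move_analysis hG hC hs hx hy hxy with ⟨b, hb, -⟩ | h
    · exact absurd ⟨b, hb⟩ hfull
    · exact ⟨x, y, hx, hy, hxy, h⟩

lemma gameMax_le [Fintype V] (hG : ∀ x y, G.Adj (f x) (f y) ↔ (blobGraph H att).Adj x y)
    (hC : ∀ u v, H.Adj u v → u ∈ C ∨ v ∈ C) :
    gameMax G ≤ C.card + 2 * Fintype.card B := by
  classical
  have h := @gameValue_le_potential V _ G (Classical.decRel _)
    (fun s => ∀ b, Good (state f s b)) (potential f C) ?_ univ
    (fun b => .inl (by simp [state]))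
  · refine h.trans (le_of_eq ?_)
    simp [potential, state, weight, mul_comm]
  · intro s hs x y hx hy hxy
    rcases move_analysis hG hC hs hx hy hxy with ⟨-, -, h⟩ | ⟨h1, h2⟩
    · exact .inr h
    · by_cases hne : ∃ x' y', x' ∈ s \ {x, y} ∧ y' ∈ s \ {x, y} ∧ G.Adj x' y'
      · obtain ⟨x', y', hx', hy', hxy', h3, h4⟩ := exists_free_move hG hC h1 hne
        exact .inr ⟨x', y', hx', hy', hxy', h3, by omega⟩
      · exact .inl ⟨by omega, fun x' y' hx' hy' hxy' => hne ⟨x', y', hx', hy', hxy'⟩⟩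

end Game

/-! ### Connectedness and regularity -/

lemma blobGraph_connected {I B : Type} {H : SimpleGraph I} {att : B → I} (hH : H.Connected) :
    (blobGraph H att).Connected := by
  have hll : ∀ u v, (blobGraph H att).Reachable (.inl u) (.inl v) := fun u v =>
    (hH.preconnected u v).map ⟨Sum.inl, fun h => h⟩
  have hb : ∀ x : Fin 5, blob.Reachable x 0 := by
    have h1 : blob.Reachable 1 0 := SimpleGraph.Adj.reachable (by decide)
    have h2 : blob.Reachable 2 0 := SimpleGraph.Adj.reachable (by decide)
    have h3 : blob.Reachable 3 1 := SimpleGraph.Adj.reachable (by decide)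
    have h4 : blob.Reachable 4 1 := SimpleGraph.Adj.reachable (by decide)
    intro x
    fin_cases x
    · exact .rfl
    · exact h1
    · exact h2
    · exact h3.trans h1
    · exact h4.trans h1
  obtain ⟨u₀⟩ := hH.nonempty
  have hroot : ∀ z, (blobGraph H att).Reachable z (.inl u₀) := by
    rintro (u | ⟨b, x⟩)
    · exact hll u u₀
    · have h1 : (blobGraph H att).Reachable (.inr (b, x)) (.inr (b, 0)) :=
        (hb x).map (G' := blobGraph H att) ⟨fun z => Sum.inr (b, z), fun h => ⟨rfl, h⟩⟩
      have h2 : (blobGraph H att).Adj (.inr (b, 0)) (.inl (att b)) := ⟨rfl, rfl⟩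
      exact h1.trans (h2.reachable.trans (hll _ _))
  have : Nonempty (I ⊕ B × Fin 5) := ⟨.inl u₀⟩
  exact ⟨fun x y => (hroot x).trans (hroot y).symm⟩

lemma blobGraph_cubic {I B : Type} [Finite I] [Finite B] {H : SimpleGraph I} {att : B → I}
    (h : ∀ u, (H.neighborSet u).ncard + {b | att b = u}.ncard = 3) (z : I ⊕ B × Fin 5) :
    ((blobGraph H att).neighborSet z).ncard = 3 := by
  rcases z with u | ⟨b, x⟩
  · have : (blobGraph H att).neighborSet (.inl u) =
        Sum.inl '' H.neighborSet u ∪ (fun b => Sum.inr (b, 0)) '' {b | att b = u} := by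
      ext (v | ⟨b, x⟩)
      · simp [blobGraph_ll]
      · simp [blobGraph_lr, eq_comm (a := x)]
    rw [this, Set.ncard_union_eq, Set.ncard_image_of_injective _ Sum.inl_injective,
      Set.ncard_image_of_injective _ (fun b b' hb => by simpa using hb), h u]
    rw [Set.disjoint_left]
    rintro _ ⟨v, -, rfl⟩ ⟨b, -, hb⟩
    simp at hb
  · have key : (blobGraph H att).neighborSet (.inr (b, x)) =
        (if x = 0 then {Sum.inl (att b)} else ∅) ∪
          (fun y => Sum.inr (b, y)) '' (blob.neighborFinset x : Set (Fin 5)) := by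
      ext (v | ⟨b', y⟩)
      · by_cases hx : x = 0 <;> simp [blobGraph_rl, hx, eq_comm (a := v)]
      · by_cases hx : x = 0 <;> simp [blobGraph_rr, hx, and_comm, eq_comm (a := b)]
    rw [key, Set.ncard_union_eq, Set.ncard_image_of_injective _ (fun y y' hb => by simpa using hb),
      Set.ncard_coe_finset]
    · have hd : ∀ x, (if x = 0 then 1 else 0) + (blob.neighborFinset x).card = 3 := by decide
      rw [← hd x]
      split_ifs <;> simp
    · rw [Set.disjoint_left]
      rintro _ h1 ⟨y, -, rfl⟩
      split_ifs at h1 <;> simp at h1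

/-! ### The trees -/

/-- One growth step of the tree: three new vertices `0, 1, 2` are added to `H`, where `0` is joined
to `1`, to `2` and to the old vertex `u₀`. -/
def growTree {I : Type} (H : SimpleGraph I) (u₀ : I) : SimpleGraph (I ⊕ Fin 3) where
  Adj
    | .inl u, .inl v => H.Adj u v
    | .inl u, .inr i => u = u₀ ∧ i = 0
    | .inr i, .inl u => u = u₀ ∧ i = 0
    | .inr i, .inr j => i ≠ j ∧ (i = 0 ∨ j = 0)
  symm := ⟨by
    rintro (u | i) (v | j) h
    · exact SimpleGraph.Adj.symm (G := H) h
    · exact h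
    · exact h
    · exact ⟨h.1.symm, h.2.symm⟩⟩
  loopless := ⟨by
    rintro (u | i) h
    · exact H.loopless.irrefl u h
    · exact h.1 rfl⟩

open Classical in
/-- The attachment of blobs after a growth step: the blob `b₀`, which used to hang at `u₀`, moves
to the new vertex `1`, which also gets one new blob; the new vertex `2` gets two new blobs. -/
noncomputable def growAtt {I B : Type} (att : B → I) (b₀ : B) : B ⊕ Fin 3 → I ⊕ Fin 3
  | .inl b => if b = b₀ then .inr 1 else .inl (att b)
  | .inr i => .inr (if i = 0 then 1 else 2)

lemma growTree_connected {I : Type} {H : SimpleGraph I} {u₀ : I} (hH : H.Connected) :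
    (growTree H u₀).Connected := by
  have h0 : (growTree H u₀).Reachable (.inr 0) (.inl u₀) :=
    SimpleGraph.Adj.reachable (show u₀ = u₀ ∧ (0 : Fin 3) = 0 from ⟨rfl, rfl⟩)
  have hroot : ∀ z, (growTree H u₀).Reachable z (.inl u₀) := by
    rintro (u | i)
    · exact (hH.preconnected u u₀).map (G' := growTree H u₀) ⟨Sum.inl, fun h => h⟩
    · by_cases hi : i = 0
      · rw [hi]; exact h0
      · have : (growTree H u₀).Adj (.inr i) (.inr 0) := ⟨hi, .inr rfl⟩
        exact this.reachable.trans h0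
  have : Nonempty (I ⊕ Fin 3) := ⟨.inl u₀⟩
  exact ⟨fun x y => (hroot x).trans (hroot y).symm⟩

lemma grow_degree {I B : Type} [Finite I] [Finite B] {H : SimpleGraph I} {att : B → I} (b₀ : B)
    (h : ∀ u, (H.neighborSet u).ncard + {b | att b = u}.ncard = 3) (z : I ⊕ Fin 3) :
    ((growTree H (att b₀)).neighborSet z).ncard + {b | growAtt att b₀ b = z}.ncard = 3 := by
  classical
  rcases z with u | i
  · by_cases hu : u = att b₀
    · have h1 : (growTree H (att b₀)).neighborSet (.inl u) =
          insert (.inr 0) (Sum.inl '' H.neighborSet u) := by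
        ext (v | i) <;> simp [growTree, hu]
      have h2 : {b | growAtt att b₀ b = .inl u} = Sum.inl '' ({b | att b = u} \ {b₀}) := by
        ext (b | i)
        · by_cases hb : b = b₀ <;> simp [growAtt, hb]
        · simp [growAtt]
      have h3 := Set.ncard_sdiff_singleton_add_one (show b₀ ∈ {b | att b = u} from hu.symm)
      rw [h1, h2, Set.ncard_insert_of_notMem (by simp),
        Set.ncard_image_of_injective _ Sum.inl_injective,
        Set.ncard_image_of_injective _ Sum.inl_injective, ← h u]
      omega
    · have h1 : (growTree H (att b₀)).neighborSet (.inl u) = Sum.inl '' H.neighborSet u := by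
        ext (v | i) <;> simp [growTree, hu]
      have h2 : {b | growAtt att b₀ b = .inl u} = Sum.inl '' {b | att b = u} := by
        ext (b | i)
        · by_cases hb : b = b₀
          · simp [growAtt, hb, Ne.symm hu]
          · simp [growAtt, hb]
        · simp [growAtt]
      rw [h1, h2, Set.ncard_image_of_injective _ Sum.inl_injective,
        Set.ncard_image_of_injective _ Sum.inl_injective, h u]
  · fin_cases i
    · have h1 : (growTree H (att b₀)).neighborSet (.inr 0) =
          ({.inl (att b₀), .inr 1, .inr 2} : Finset (I ⊕ Fin 3)) := by
        ext (v | i)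
        · simp [growTree]
        · fin_cases i <;> simp [growTree]
      have h2 : {b | growAtt att b₀ b = .inr 0} = ∅ := by
        ext (b | i)
        · by_cases hb : b = b₀ <;> simp [growAtt, hb]
        · fin_cases i <;> simp [growAtt]
      simp only [Fin.zero_eta, h1, h2, Set.ncard_coe_finset]
      simp
    · have h1 : (growTree H (att b₀)).neighborSet (.inr 1) = {.inr 0} := by
        ext (v | i)
        · simp [growTree]
        · fin_cases i <;> simp [growTree]
      have h2 : {b | growAtt att b₀ b = .inr 1} = {.inl b₀, .inr 0} := by
        ext (b | i)
        · by_cases hb : b = b₀ <;> simp [growAtt, hb]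
        · fin_cases i <;> simp [growAtt]
      simp only [Fin.mk_one, h1, h2]
      rw [Set.ncard_pair (by simp), Set.ncard_singleton]
    · have h1 : (growTree H (att b₀)).neighborSet (.inr 2) = {.inr 0} := by
        ext (v | i)
        · simp [growTree]
        · fin_cases i <;> simp [growTree]
      have h2 : {b | growAtt att b₀ b = .inr 2} = {.inr 1, .inr 2} := by
        ext (b | i)
        · by_cases hb : b = b₀ <;> simp [growAtt, hb]
        · fin_cases i <;> simp [growAtt]
      simp only [Fin.reduceFinMk, h1, h2]
      rw [Set.ncard_pair (by simp), Set.ncard_singleton]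

/-- For every `c` there is a tree with `3c + 1` vertices and a vertex cover of size `c`, together
with an attachment of `3c + 3` blobs that raises every degree to three. -/
lemma exists_tree (c : ℕ) : ∃ (I B : Type) (_ : Fintype I) (_ : Fintype B) (H : SimpleGraph I)
    (att : B → I) (C : Finset I), Fintype.card I = 3 * c + 1 ∧ Fintype.card B = 3 * c + 3 ∧
      C.card = c ∧ H.Connected ∧
      (∀ u, (H.neighborSet u).ncard + {b | att b = u}.ncard = 3) ∧
      ∀ u v, H.Adj u v → u ∈ C ∨ v ∈ C := by
  induction c with
  | zero =>
    refine ⟨Unit, Fin 3, inferInstance, inferInstance, ⊥, fun _ => (), ∅, by simp, by simp,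
      by simp, ?_, ?_, by simp⟩
    · exact ⟨fun x y => .rfl⟩
    · intro u
      simp
  | succ c ih =>
    obtain ⟨I, B, _, _, H, att, C, hI, hB, hCc, hconn, hdeg, hcov⟩ := ih
    obtain ⟨b₀⟩ : Nonempty B := Fintype.card_pos_iff.1 (by omega)
    refine ⟨I ⊕ Fin 3, B ⊕ Fin 3, inferInstance, inferInstance, growTree H (att b₀),
      growAtt att b₀, C.disjSum {0}, ?_, ?_, ?_, growTree_connected hconn, grow_degree b₀ hdeg, ?_⟩
    · simp only [Fintype.card_sum, Fintype.card_fin]; omega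
    · simp only [Fintype.card_sum, Fintype.card_fin]; omega
    · simp [hCc]
    · rintro (u | i) (v | j) h
      · simpa using hcov u v h
      · right; simp [h.2]
      · left; simp [h.2]
      · simpa using h.2

lemma exists_cubic (c : ℕ) : ∃ G : SimpleGraph (Fin (18 * c + 16)), G.Connected ∧
    (∀ v, (G.neighborSet v).ncard = 3) ∧ gameMax G ≤ 7 * c + 6 := by
  obtain ⟨I, B, _, _, H, att, C, hI, hB, hCc, hconn, hdeg, hcov⟩ := exists_tree c
  have hcard : Fintype.card (I ⊕ B × Fin 5) = 18 * c + 16 := by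
    simp only [Fintype.card_sum, Fintype.card_prod, Fintype.card_fin, hI, hB]; ring
  let f := Fintype.equivFinOfCardEq hcard
  let e : blobGraph H att ≃g (blobGraph H att).map f.toEmbedding :=
    SimpleGraph.Iso.map f (blobGraph H att)
  refine ⟨(blobGraph H att).map f.toEmbedding, e.connected_iff.1 (blobGraph_connected hconn),
    fun v => ?_, ?_⟩
  · obtain ⟨z, rfl⟩ := e.surjective v
    rw [← blobGraph_cubic hdeg z, ← Nat.card_coe_set_eq, ← Nat.card_coe_set_eq]
    exact (Nat.card_congr (e.mapNeighborSet z)).symm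
  · have := gameMax_le (f := f) (C := C) (fun x y => e.map_adj_iff (v := x) (w := y)) hcov
    omega

/-- there are connected cubic graphs of arbitrarily large order
`n` with `Max(G) < (7/18)·n`; in fact one exists for every `n = 18·2^k - 2`. -/
theorem stmt19 :
    (∀ N : ℕ, ∃ (n : ℕ) (G : SimpleGraph (Fin n)), N ≤ n ∧ G.Connected ∧
      (∀ v, (G.neighborSet v).ncard = 3) ∧ 18 * gameMax G < 7 * n) ∧
    (∀ k : ℕ, ∃ G : SimpleGraph (Fin (18 * 2 ^ k - 2)), G.Connected ∧
      (∀ v, (G.neighborSet v).ncard = 3) ∧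
      18 * gameMax G < 7 * (18 * 2 ^ k - 2)) := by
  have key : ∀ k : ℕ, ∃ G : SimpleGraph (Fin (18 * 2 ^ k - 2)), G.Connected ∧
      (∀ v, (G.neighborSet v).ncard = 3) ∧ 18 * gameMax G < 7 * (18 * 2 ^ k - 2) := by
    intro k
    have hk : 1 ≤ 2 ^ k := Nat.one_le_two_pow
    have hn : 18 * 2 ^ k - 2 = 18 * (2 ^ k - 1) + 16 := by omega
    rw [hn]
    obtain ⟨G, h1, h2, h3⟩ := exists_cubic (2 ^ k - 1)
    exact ⟨G, h1, h2, by omega⟩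
  refine ⟨fun N => ?_, key⟩
  obtain ⟨G, h⟩ := key N
  have hN : N < 2 ^ N := Nat.lt_two_pow_self
  exact ⟨_, G, by omega, h⟩
end
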